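/- Let (X_i)_{i≥1} be i.i.d. standard normal, X_{(n)} = max_{1≤i≤n} X_i, a_n = √(2 log n), c_n = log(√(4π log n)), and F_n(x) = Φ(a_n + (x - c_n)/a_n)^n. Then for every fixed x ∈ ℝ, as n → ∞, F_n(x) = exp(-e^{-x}) + exp(-e^{-x} - x) · ((log log n)²/(16 log n)) · (1 + o(1)). -/

import Mathlib

open MeasureTheory Filter Real

/-- The standard normal cumulative distribution function. -/
noncomputable def stdNormalCDF (x : ℝ) : ℝ :=
  ∫ t in Set.Iic x, Real.exp (-t ^ 2 / 2) / Real.sqrt (2 * Real.pi)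

/-- The standard normal density. -/
noncomputable def stdNormalPDF (x : ℝ) : ℝ :=
  Real.exp (-x ^ 2 / 2) / Real.sqrt (2 * Real.pi)

/-- Scaling constant `a_n = √(2 log n)`. -/
noncomputable def aSeq (n : ℕ) : ℝ := Real.sqrt (2 * Real.log n)

/-- Centering constant
`b_n = √(2 log n) - (log log n + log (4π)) / (2 √(2 log n))`. -/
noncomputable def bSeq (n : ℕ) : ℝ :=
  aSeq n - (Real.log (Real.log n) + Real.log (4 * Real.pi)) / (2 * aSeq n)

/-- `c_n = log (√(4 π log n))`. -/
noncomputable def cSeq (n : ℕ) : ℝ := Real.log (Real.sqrt (4 * Real.pi * Real.log n))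

/-- The CDF of `Y_n = a_n (X_{(n)} - b_n)` where `X_{(n)}` is the maximum of `n`
i.i.d. standard normal random variables: `P(Y_n ≤ x) = Φ(b_n + x/a_n)^n`. -/
noncomputable def Fmax (n : ℕ) (x : ℝ) : ℝ := stdNormalCDF (bSeq n + x / aSeq n) ^ n

/-- The density of `Y_n = a_n (X_{(n)} - b_n)`:
`f_n(x) = n a_n⁻¹ φ(b_n + x/a_n) Φ(b_n + x/a_n)^{n-1}`. -/
noncomputable def fmax (n : ℕ) (x : ℝ) : ℝ :=
  n * (aSeq n)⁻¹ * stdNormalPDF (bSeq n + x / aSeq n) *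
    stdNormalCDF (bSeq n + x / aSeq n) ^ (n - 1)

/-- The density of the standard Gumbel distribution. -/
noncomputable def gumbelPDF (x : ℝ) : ℝ := Real.exp (-x - Real.exp (-x))

lemma slope_lim {f : ℝ → ℝ} {f' a k : ℝ} (hf : HasDerivAt f f' a) {s e : ℕ → ℝ}
    (he : Tendsto e atTop (nhds 0)) (he0 : ∀ᶠ n in atTop, e n ≠ 0)
    (hs : Tendsto (fun n => (s n - a) / e n) atTop (nhds k)) :
    Tendsto (fun n => (f (s n) - f a) / e n) atTop (nhds (f' * k)) := by
  have h1 : Tendsto s atTop (nhds a) := by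
    have := (hs.mul he).add_const a
    simp only [mul_zero, zero_add] at this
    refine this.congr' ?_
    filter_upwards [he0] with n hn
    field_simp; ring
  have h2 : Tendsto (fun n => dslope f a (s n)) atTop (nhds f') := by
    have hc : ContinuousAt (dslope f a) a := continuousAt_dslope_same.2 hf.differentiableAt
    have := hc.tendsto.comp h1
    rwa [dslope_same, hf.deriv] at this
  refine (h2.mul hs).congr fun n => ?_
  have := sub_smul_dslope f a (s n)
  simp only [smul_eq_mul] at this
  rw [← this]; ring

lemma phi_int : Integrable (fun t : ℝ => Real.exp (-t ^ 2 / 2) / Real.sqrt (2 * Real.pi)) := by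
  have := (integrable_exp_neg_mul_sq (b := 1/2) (by norm_num)).div_const (Real.sqrt (2 * Real.pi))
  refine this.congr (ae_of_all _ fun t => ?_)
  simp only
  congr 2; ring

lemma phi_total : ∫ t : ℝ, Real.exp (-t ^ 2 / 2) / Real.sqrt (2 * Real.pi) = 1 := by
  rw [integral_div]
  have := integral_gaussian (1/2)
  have h2 : ∫ t : ℝ, Real.exp (-t ^ 2 / 2) = Real.sqrt (2 * Real.pi) := by
    rw [show 2 * Real.pi = Real.pi / (1/2) by ring, ← this]
    congr 1; ext t; congr 1; ring
  rw [h2, div_self]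
  positivity

lemma cdf_tail (u : ℝ) : 1 - stdNormalCDF u =
    ∫ t in Set.Ioi u, Real.exp (-t ^ 2 / 2) / Real.sqrt (2 * Real.pi) := by
  have := integral_add_compl (measurableSet_Iic (a := u)) phi_int
  rw [phi_total, Set.compl_Iic] at this
  unfold stdNormalCDF
  linarith

lemma phi_deriv (t : ℝ) : HasDerivAt stdNormalPDF (-t * stdNormalPDF t) t := by
  unfold stdNormalPDF
  have h : HasDerivAt (fun t : ℝ => -t ^ 2 / 2) (-t) t := by
    have := ((hasDerivAt_id t).pow 2).neg.div_const 2
    refine this.congr_deriv ?_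
    simp
    ring
  refine (h.exp.div_const (Real.sqrt (2 * Real.pi))).congr_deriv ?_
  ring

lemma phi_pos (t : ℝ) : 0 < stdNormalPDF t := by
  unfold stdNormalPDF; positivity

lemma phi_tendsto : Tendsto stdNormalPDF atTop (nhds 0) := by
  have h : Tendsto (fun t : ℝ => Real.exp (-t ^ 2 / 2)) atTop (nhds 0) := by
    refine tendsto_exp_atBot.comp ?_
    have : Tendsto (fun t : ℝ => t ^ 2 / 2) atTop atTop :=
      (tendsto_pow_atTop two_ne_zero).atTop_div_const (by norm_num)
    refine (tendsto_neg_atTop_atBot.comp this).congr fun t => ?_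
    simp only [Function.comp]; ring
  have := h.div_const (Real.sqrt (2 * Real.pi))
  rwa [zero_div] at this

lemma mills_upper {u : ℝ} (hu : 0 < u) : 1 - stdNormalCDF u ≤ stdNormalPDF u / u := by
  have hd : ∀ t ∈ Set.Ici u, HasDerivAt (fun t => -(stdNormalPDF t * t⁻¹))
      ((1 + (t^2)⁻¹) * stdNormalPDF t) t := by
    intro t ht
    have ht0 : t ≠ 0 := (lt_of_lt_of_le hu ht).ne'
    refine ((phi_deriv t).mul (hasDerivAt_inv ht0)).neg.congr_deriv ?_
    field_simp; ring
  have hpos : ∀ t ∈ Set.Ioi u, 0 ≤ (1 + (t^2)⁻¹) * stdNormalPDF t := fun t _ =>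
    mul_nonneg (by positivity) (phi_pos t).le
  have hl : Tendsto (fun t => -(stdNormalPDF t * t⁻¹)) atTop (nhds 0) := by
    have := (phi_tendsto.mul tendsto_inv_atTop_zero).neg
    simpa using this
  have hi := integrableOn_Ioi_deriv_of_nonneg' hd hpos hl
  have he := integral_Ioi_of_hasDerivAt_of_nonneg' hd hpos hl
  rw [cdf_tail]
  calc _ ≤ ∫ t in Set.Ioi u, (1 + (t^2)⁻¹) * stdNormalPDF t := by
        refine setIntegral_mono_on phi_int.integrableOn hi measurableSet_Ioi fun t _ => ?_
        change stdNormalPDF t ≤ _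
        have := phi_pos t
        have h2 : 0 ≤ (t^2)⁻¹ := by positivity
        nlinarith
    _ = _ := by rw [he]; ring

lemma mills_lower {u : ℝ} (hu : 2 ≤ u) :
    stdNormalPDF u / u * (1 - (u^2)⁻¹) ≤ 1 - stdNormalCDF u := by
  have hd : ∀ t ∈ Set.Ici u, HasDerivAt (fun t => -(stdNormalPDF t * (t⁻¹ - t⁻¹ ^ 3)))
      ((1 - 3 * (t⁻¹)^4) * stdNormalPDF t) t := by
    intro t ht
    have ht0 : t ≠ 0 := by have : u ≤ t := ht; intro h; linarith
    refine ((phi_deriv t).mul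
      ((hasDerivAt_inv ht0).sub ((hasDerivAt_inv ht0).pow 3))).neg.congr_deriv ?_
    simp only [Pi.sub_apply, Pi.pow_apply, Nat.reduceSub, inv_pow]
    field_simp; ring
  have hpos : ∀ t ∈ Set.Ioi u, 0 ≤ (1 - 3 * (t⁻¹)^4) * stdNormalPDF t := fun t ht => by
    refine mul_nonneg ?_ (phi_pos t).le
    have h1 : t⁻¹ ≤ 2⁻¹ := inv_anti₀ (by norm_num) (hu.trans (le_of_lt ht))
    have h0 : 0 ≤ t⁻¹ := by
      have : u < t := ht
      exact inv_nonneg.2 (by linarith)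
    have : (t⁻¹)^4 ≤ (2⁻¹:ℝ)^4 := by gcongr
    norm_num at this ⊢
    linarith
  have hl : Tendsto (fun t => -(stdNormalPDF t * (t⁻¹ - t⁻¹ ^ 3))) atTop (nhds 0) := by
    have := (phi_tendsto.mul ((tendsto_inv_atTop_zero (𝕜 := ℝ)).sub
      ((tendsto_inv_atTop_zero (𝕜 := ℝ)).pow 3))).neg
    simpa using this
  have hi := integrableOn_Ioi_deriv_of_nonneg' hd hpos hl
  have he := integral_Ioi_of_hasDerivAt_of_nonneg' hd hpos hl
  rw [cdf_tail]
  calc _ = ∫ t in Set.Ioi u, (1 - 3 * (t⁻¹)^4) * stdNormalPDF t := by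
        rw [he]; field_simp; ring
    _ ≤ _ := by
        refine setIntegral_mono_on hi phi_int.integrableOn measurableSet_Ioi fun t _ => ?_
        change _ ≤ stdNormalPDF t
        have := phi_pos t
        have h2 : 0 ≤ (t⁻¹)^4 := by positivity
        nlinarith

/-- Value of the density at the normalized point. -/
lemma phi_point (x : ℝ) {n : ℕ} (hn : 0 < Real.log n) :
    n * stdNormalPDF (aSeq n + (x - cSeq n) / aSeq n) =
      aSeq n * (Real.exp (-x) * Real.exp (-((x - cSeq n) ^ 2 / (4 * Real.log n)))) := by
  have hn0 : (0:ℝ) < n := by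
    rcases Nat.eq_zero_or_pos n with h | h
    · subst h; simp at hn
    · exact_mod_cast h
  have ha : aSeq n ^ 2 = 2 * Real.log n := Real.sq_sqrt (by positivity)
  have ha0 : 0 < aSeq n := Real.sqrt_pos.2 (by positivity)
  have hu : -(aSeq n + (x - cSeq n) / aSeq n) ^ 2 / 2 =
      -Real.log n + cSeq n + (-x) + (-((x - cSeq n) ^ 2 / (4 * Real.log n))) := by
    have : (aSeq n + (x - cSeq n) / aSeq n) ^ 2
        = aSeq n ^ 2 + 2 * (x - cSeq n) + (x - cSeq n) ^ 2 / aSeq n ^ 2 := by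
      field_simp
      ring
    rw [this, ha]
    field_simp
    ring
  unfold stdNormalPDF
  rw [hu, Real.exp_add, Real.exp_add, Real.exp_add, Real.exp_neg, Real.exp_log hn0]
  have hc : Real.exp (cSeq n) = Real.sqrt (2 * Real.pi) * aSeq n := by
    unfold cSeq aSeq
    rw [Real.exp_log (Real.sqrt_pos.2 (by positivity)), ← Real.sqrt_mul (by positivity)]
    congr 1; ring
  rw [hc]
  have : 0 < Real.sqrt (2 * Real.pi) := by positivity
  field_simp

lemma c_eq {n : ℕ} (hn : 0 < Real.log n) :
    cSeq n = Real.log (4 * Real.pi) / 2 + Real.log (Real.log n) / 2 := by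
  unfold cSeq
  rw [Real.log_sqrt (by positivity), Real.log_mul (by positivity) hn.ne']
  ring

/-- Pointwise expansion: for every fixed `x ∈ ℝ`,
`F_n(x) = exp(-e^{-x}) + exp(-e^{-x} - x) (log log n)²/(16 log n) (1 + o(1))`
as `n → ∞`, where `F_n(x) = Φ(a_n + (x - c_n)/a_n)^n`. -/
theorem pointwise_cdf_asymptotic (x : ℝ) :
    Tendsto (fun n : ℕ =>
        (stdNormalCDF (aSeq n + (x - cSeq n) / aSeq n) ^ n - Real.exp (-Real.exp (-x))) /
          (Real.exp (-Real.exp (-x) - x) * ((Real.log (Real.log n)) ^ 2 / (16 * Real.log n))))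
      atTop (nhds 1) := by
  set L : ℕ → ℝ := fun n => Real.log n with hLdef
  set l : ℕ → ℝ := fun n => Real.log (L n) with hldef
  set e : ℕ → ℝ := fun n => l n ^ 2 / (16 * L n) with hedef
  set d : ℕ → ℝ := fun n => x - cSeq n with hddef
  set A : ℕ → ℝ := fun n => (1 + d n / L n / 2)⁻¹ with hAdef
  set u : ℕ → ℝ := fun n => aSeq n + (x - cSeq n) / aSeq n with hudef
  set T : ℕ → ℝ := fun n => n * (1 - stdNormalCDF (u n)) with hTdef
  set E : ℕ → ℝ := fun n => Real.exp (-(d n ^ 2 / (4 * L n))) with hEdef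
  set M : ℕ → ℝ := fun n => T n / (Real.exp (-x) * E n * A n) with hMdef
  have hL : Tendsto L atTop atTop := Real.tendsto_log_atTop.comp tendsto_natCast_atTop_atTop
  have hl : Tendsto l atTop atTop := Real.tendsto_log_atTop.comp hL
  have hLp : ∀ᶠ n in atTop, 0 < L n := hL.eventually_gt_atTop 0
  have hlp : ∀ᶠ n in atTop, 0 < l n := hl.eventually_gt_atTop 0
  have hli : Tendsto (fun n => (l n)⁻¹) atTop (nhds 0) := tendsto_inv_atTop_zero.comp hl
  have hl2 : Tendsto (fun n => l n ^ 2 / L n) atTop (nhds 0) :=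
    ((Real.isLittleO_pow_log_id_atTop (n := 2)).tendsto_div_nhds_zero).comp hL
  have hl1 : Tendsto (fun n => l n / L n) atTop (nhds 0) :=
    (Real.isLittleO_log_id_atTop.tendsto_div_nhds_zero).comp hL
  have hLn : Tendsto (fun n : ℕ => L n / n) atTop (nhds 0) :=
    (Real.isLittleO_log_id_atTop.tendsto_div_nhds_zero).comp tendsto_natCast_atTop_atTop
  have he : Tendsto e atTop (nhds 0) := by
    have := hl2.div_const 16
    rw [zero_div] at this
    refine this.congr fun n => ?_
    simp only [hedef]; rw [div_div, mul_comm]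
  have hep : ∀ᶠ n in atTop, 0 < e n := by
    filter_upwards [hLp, hlp] with n h1 h2
    simp only [hedef]; positivity
  have hene : ∀ᶠ n in atTop, e n ≠ 0 := hep.mono fun n h => h.ne'
  have hdl : Tendsto (fun n => d n / l n) atTop (nhds (-1/2)) := by
    have := (hli.const_mul (x - Real.log (4 * Real.pi) / 2)).sub_const (1/2)
    rw [mul_zero, zero_sub, ← neg_div] at this
    refine this.congr' ?_
    filter_upwards [hLp, hlp] with n h1 h2
    simp only [hddef]
    rw [c_eq h1]
    change _ = (x - (_ + l n / 2)) / l n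
    field_simp
    ring
  have hdL : Tendsto (fun n => d n / L n) atTop (nhds 0) := by
    have := hdl.mul hl1
    rw [mul_zero] at this
    refine this.congr' ?_
    filter_upwards [hLp, hlp] with n h1 h2
    field_simp
  have hA : Tendsto A atTop (nhds 1) := by
    have := ((hdL.div_const 2).const_add 1).inv₀ (by norm_num)
    simpa using this
  have hB : ∀ᶠ n in atTop, 0 < 1 + d n / L n / 2 := by
    have := ((hdL.div_const 2).const_add 1)
    exact this.eventually (lt_mem_nhds (by norm_num))
  -- the exponential factor
  have hE : Tendsto (fun n => (E n - 1) / e n) atTop (nhds (-1)) := by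
    have h1 : Tendsto (fun n => (-(d n ^ 2 / (4 * L n)) - 0) / e n) atTop (nhds (-1)) := by
      have := (hdl.pow 2).const_mul (-4)
      rw [show (-4:ℝ) * (-1/2)^2 = -1 by norm_num] at this
      refine this.congr' ?_
      filter_upwards [hLp, hlp] with n h1 h2
      simp only [hedef]
      field_simp
      ring
    have := slope_lim (Real.hasDerivAt_exp 0) he hene h1
    simpa using this
  -- the ratio factor
  have hA1 : Tendsto (fun n => (A n - 1) / e n) atTop (nhds 0) := by
    have := ((hA.mul hdl).mul hli).const_mul (-8)
    rw [mul_zero, mul_zero] at this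
    refine this.congr' ?_
    filter_upwards [hLp, hlp, hB] with n h1 h2 h3
    have : A n - 1 = - A n * (d n / L n / 2) := by
      have : A n * (1 + d n / L n / 2) = 1 := inv_mul_cancel₀ h3.ne'
      linarith
    rw [this]
    simp only [hedef]
    field_simp
    ring
  have hu_eq : ∀ᶠ n in atTop, u n = aSeq n * (1 + d n / L n / 2) := by
    filter_upwards [hLp] with n h1
    have ha : aSeq n ^ 2 = 2 * L n := Real.sq_sqrt (by change 0 ≤ 2 * L n; positivity)
    have ha0 : 0 < aSeq n := Real.sqrt_pos.2 (by change 0 < 2 * L n; positivity)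
    have hL2 : L n = aSeq n ^ 2 / 2 := by linarith
    rw [hL2]
    change aSeq n + d n / aSeq n = _
    field_simp
  have ha_top : Tendsto aSeq atTop atTop := by
    have : Tendsto (fun n => 2 * L n) atTop atTop := hL.const_mul_atTop (by norm_num)
    exact Real.tendsto_sqrt_atTop.comp this
  have hu_top : Tendsto u atTop atTop := by
    have h1 : Tendsto (fun n => 1 + d n / L n / 2) atTop (nhds 1) := by
      simpa using ((hdL.div_const 2).const_add 1)
    exact (ha_top.atTop_mul_pos one_pos h1).congr' (hu_eq.mono fun n h => h.symm)
  have hTeq : ∀ᶠ n in atTop, n * (stdNormalPDF (u n) / u n) = Real.exp (-x) * E n * A n := by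
    filter_upwards [hLp, hu_eq, hB] with n h1 h2 h3
    have ha0 : 0 < aSeq n := Real.sqrt_pos.2 (by change 0 < 2 * L n; positivity)
    have := phi_point x h1
    change n * stdNormalPDF (u n) = aSeq n * (Real.exp (-x) * E n) at this
    rw [← mul_div_assoc, this, h2]
    simp only [hAdef]
    rw [mul_div_mul_left _ _ ha0.ne', div_eq_mul_inv]
  have hGp : ∀ᶠ n in atTop, 0 < Real.exp (-x) * E n * A n := by
    filter_upwards [hB] with n h
    have : 0 < A n := inv_pos.2 h
    have : 0 < E n := Real.exp_pos _
    positivity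
  have hMup : ∀ᶠ n in atTop, M n ≤ 1 := by
    filter_upwards [hTeq, hGp, hu_top.eventually_gt_atTop 0] with n h1 h2 h3
    simp only [hMdef]
    rw [div_le_one h2, ← h1]
    exact mul_le_mul_of_nonneg_left (mills_upper h3) (Nat.cast_nonneg n)
  have hMlo : ∀ᶠ n in atTop, 1 - (u n ^ 2)⁻¹ ≤ M n := by
    filter_upwards [hTeq, hGp, hu_top.eventually_ge_atTop 2] with n h1 h2 h3
    simp only [hMdef]
    rw [le_div_iff₀ h2, ← h1]
    have := mul_le_mul_of_nonneg_left (mills_lower h3) (Nat.cast_nonneg (α := ℝ) n)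
    calc _ = _ := by ring
      _ ≤ _ := this
  have hM1 : Tendsto (fun n => (M n - 1) / e n) atTop (nhds 0) := by
    have h1 : Tendsto (fun n => -(u n ^ 2)⁻¹ / e n) atTop (nhds 0) := by
      have := ((hA.pow 2).mul (hli.pow 2)).const_mul (-8)
      rw [zero_pow two_ne_zero, mul_zero, mul_zero] at this
      refine this.congr' ?_
      filter_upwards [hLp, hlp, hu_eq] with n h1 h2 h3
      have ha : aSeq n ^ 2 = 2 * L n := Real.sq_sqrt (by change 0 ≤ 2 * L n; positivity)
      rw [h3, mul_pow, mul_inv, ha, ← inv_pow (1 + _)]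
      change _ = -((2 * L n)⁻¹ * A n ^ 2) / (l n ^ 2 / (16 * L n))
      field_simp
      ring
    refine tendsto_of_tendsto_of_tendsto_of_le_of_le' h1 tendsto_const_nhds ?_ ?_
    · filter_upwards [hMlo, hep] with n h1 h2
      exact div_le_div_of_nonneg_right (by linarith) h2.le
    · filter_upwards [hMup, hep] with n h1 h2
      exact div_nonpos_of_nonpos_of_nonneg (by linarith) h2.le
  have hM : Tendsto M atTop (nhds 1) := by
    have := (hM1.mul he).const_add 1
    rw [mul_zero, add_zero] at this
    refine this.congr' ?_
    filter_upwards [hene] with n h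
    field_simp; ring
  have hT1 : Tendsto (fun n => (T n - Real.exp (-x)) / e n) atTop (nhds (-Real.exp (-x))) := by
    have := (((hE.mul (hA.mul hM)).add (hA1.mul hM)).add hM1).const_mul (Real.exp (-x))
    rw [show Real.exp (-x) * (-1 * (1 * 1) + 0 * 1 + 0) = -Real.exp (-x) by ring] at this
    refine this.congr' ?_
    filter_upwards [hGp, hene] with n h h0
    have : T n = Real.exp (-x) * E n * A n * M n := by
      simp only [hMdef]; rw [mul_div_cancel₀ _ h.ne']
    rw [this]
    field_simp
    ring
  have hT : Tendsto T atTop (nhds (Real.exp (-x))) := by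
    have := (hT1.mul he).const_add (Real.exp (-x))
    rw [mul_zero, add_zero] at this
    refine this.congr' ?_
    filter_upwards [hene] with n h
    field_simp; ring
  have hTn : Tendsto (fun n => T n / n) atTop (nhds 0) :=
    hT.div_atTop tendsto_natCast_atTop_atTop
  have hne : Tendsto (fun n : ℕ => (n * e n)⁻¹) atTop (nhds 0) := by
    have := (hLn.mul (hli.pow 2)).const_mul 16
    rw [zero_mul, mul_zero] at this
    refine this.congr' ?_
    filter_upwards [hLp, hlp, eventually_gt_atTop 0] with n h1 h2 h3
    have : (0:ℝ) < n := by exact_mod_cast h3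
    simp only [hedef]
    field_simp
  have hS : Tendsto (fun n => (n * Real.log (stdNormalCDF (u n)) - (-Real.exp (-x))) / e n) atTop
      (nhds (Real.exp (-x))) := by
    have hup : Tendsto (fun n => (-T n - (-Real.exp (-x))) / e n) atTop (nhds (Real.exp (-x))) := by
      have := hT1.neg
      rw [neg_neg] at this
      refine this.congr fun n => ?_
      ring
    have hlo : Tendsto (fun n => (-T n / (1 - T n / n) - (-Real.exp (-x))) / e n) atTop
        (nhds (Real.exp (-x))) := by
      have := hup.sub (((hT.pow 2).div (hTn.const_sub 1) (by norm_num)).mul hne)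
      rw [mul_zero, sub_zero] at this
      refine this.congr' ?_
      filter_upwards [hene, eventually_gt_atTop 0,
        hTn.eventually (gt_mem_nhds (zero_lt_one))] with n h1 h2 h3
      have h4 : (0:ℝ) < n := by exact_mod_cast h2
      have h5 : 1 - T n / n ≠ 0 := by linarith
      have h6 : (n:ℝ) - T n ≠ 0 := by
        intro h; apply h5; field_simp; rw [h, mul_zero]
      simp only [Pi.div_apply, Pi.pow_apply]
      rw [one_sub_div h4.ne']
      field_simp
      ring
    refine tendsto_of_tendsto_of_tendsto_of_le_of_le' hlo hup ?_ ?_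
    · filter_upwards [hep, eventually_gt_atTop 0,
        hTn.eventually (gt_mem_nhds (zero_lt_one))] with n h1 h2 h3
      have h4 : (0:ℝ) < n := by exact_mod_cast h2
      have h5 : stdNormalCDF (u n) = 1 - T n / n := by
        simp only [hTdef]; field_simp; ring
      have h6 : 0 < 1 - T n / n := by linarith
      refine div_le_div_of_nonneg_right (sub_le_sub_right ?_ _) h1.le
      rw [h5]
      have := mul_le_mul_of_nonneg_left (Real.one_sub_inv_le_log_of_pos h6) h4.le
      refine le_trans (le_of_eq ?_) this
      have h7 : (n:ℝ) - T n ≠ 0 := by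
        intro h; apply h6.ne'; field_simp; rw [h, mul_zero]
      rw [one_sub_div h4.ne']
      field_simp
      ring
    · filter_upwards [hep, eventually_gt_atTop 0,
        hTn.eventually (gt_mem_nhds (zero_lt_one))] with n h1 h2 h3
      have h4 : (0:ℝ) < n := by exact_mod_cast h2
      have h5 : stdNormalCDF (u n) = 1 - T n / n := by
        simp only [hTdef]; field_simp; ring
      have h6 : 0 < 1 - T n / n := by linarith
      refine div_le_div_of_nonneg_right (sub_le_sub_right ?_ _) h1.le
      rw [h5]
      have := mul_le_mul_of_nonneg_left (Real.log_le_sub_one_of_pos h6) h4.le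
      refine this.trans (le_of_eq ?_)
      field_simp
      ring
  have hF := slope_lim (Real.hasDerivAt_exp (-Real.exp (-x))) he hene hS
  have hG := hF.div_const (Real.exp (-Real.exp (-x) - x))
  rw [show Real.exp (-Real.exp (-x)) * Real.exp (-x) / Real.exp (-Real.exp (-x) - x) = 1 by
    rw [← Real.exp_add, ← sub_eq_add_neg, div_self (Real.exp_pos _).ne']] at hG
  refine hG.congr' ?_
  filter_upwards [eventually_gt_atTop 0,
        hTn.eventually (gt_mem_nhds (zero_lt_one))] with n h2 h3
  have h4 : (0:ℝ) < n := by exact_mod_cast h2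
  have h5 : stdNormalCDF (u n) = 1 - T n / n := by
    simp only [hTdef]; field_simp; ring
  have h6 : 0 < stdNormalCDF (u n) := by linarith
  rw [Real.exp_nat_mul, Real.exp_log h6, div_div, mul_comm (e n)]
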